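/- Let p, q, r be distinct primes and G = C_p ⊕ C_q ⊕ C_r. If S is a zero-sum free sequence over G with k(S) = k(G), then S = S_p · S_q · S_r where S_p, S_q, S_r are zero-sum free sequences over the p-primary, q-primary, and r-primary components of G respectively; in particular every element of S lies in one of the three cyclic direct summands. -/

import Mathlib

/-- The cross number `k(S)` of a sequence (finite multiset) `S` over an additive group:
the sum, with multiplicity, of the reciprocals of the orders of its elements. -/
noncomputable def crossNum {G : Type*} [AddCommGroup G] (S : Multiset G) : ℝ :=
  (S.map fun g => ((addOrderOf g : ℝ))⁻¹).sum

/-- `S` is zero-sum free: no nonempty sub-multiset of `S` has sum `0`. -/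
def IsZeroSumFree {G : Type*} [AddCommGroup G] (S : Multiset G) : Prop :=
  ∀ T : Multiset G, T ≤ S → T ≠ 0 → T.sum ≠ 0

/-- The little cross number `k(G)`: the maximal cross number of a zero-sum free
sequence over `G`. -/
noncomputable def littleK (G : Type*) [AddCommGroup G] : ℝ :=
  sSup {x : ℝ | ∃ S : Multiset G, IsZeroSumFree S ∧ crossNum S = x}

/-!
Let `G` be finite cyclic of squarefree order `n`. Taking `p - 1` terms of order `p` for each prime
`p ∣ n` gives a zero-sum free sequence of cross number `k* = ∑ (1 - 1/p)`, and if all terms of `S`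
have prime order then `k(S) ≤ k*`, as fewer than `d` terms of `S` have orders dividing `d`. So it is
enough that `k(S) ≥ k*` forces all orders to be prime.

* If `S` has `p - 1` terms of order `p`, multiplication by `p` maps the remaining terms to a
  zero-sum free sequence over the subgroup of order `n / p`, and one concludes by induction on `n`.
* If `S` has `minFac d` terms of some order `d ≠ 1`, some of them have a sum of order dividing
  `d / minFac d`. Replacing these by their sum keeps `k(S) ≥ k*`, and induction on the length of `S`
  leads back to the first case.
* Otherwise there are at most `minFac d - 1` terms of each order `d`, and one fewer if `d` is prime,
  so `∑_{p ∣ n} 1 ≤ ∑_{d ∣ n} (minFac d - 1) / d`. For `n = pqr` with `p < q < r` the right side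
  minus `3` is `1/r - 1/p - 1/pq - 1/pr - 1/pqr < 0`, a contradiction.
-/

section Multiset

variable {α β : Type*}

lemma exists_le_map_eq_of_le_map {f : α → β} {S : Multiset α} {T : Multiset β} (h : T ≤ S.map f) :
    ∃ U ≤ S, U.map f = T := by
  have hT : T ∈ (S.map f).powersetCard T.card := Multiset.mem_powersetCard.2 ⟨h, rfl⟩
  rw [Multiset.powersetCard_map] at hT
  obtain ⟨U, hU, rfl⟩ := Multiset.mem_map.1 hT
  exact ⟨U, (Multiset.mem_powersetCard.1 hU).1, rfl⟩

lemma exists_le_card_eq_of_le_card {S : Multiset α} {n : ℕ} (h : n ≤ S.card) :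
    ∃ T ≤ S, T.card = n := by
  obtain ⟨T, hT⟩ := Multiset.card_pos_iff_exists_mem.1
    (by simpa using Nat.choose_pos h : 0 < (S.powersetCard n).card)
  exact ⟨T, Multiset.mem_powersetCard.1 hT⟩

lemma exists_add_eq_of_le_add {S T V : Multiset α} (h : V ≤ S + T) :
    ∃ A ≤ S, ∃ B ≤ T, A + B = V := by
  classical
  refine ⟨V ∩ S, Multiset.inter_le_right, V - S, ?_, ?_⟩
  · rwa [tsub_le_iff_left]
  · rw [add_comm, Multiset.sub_add_inter]

lemma sum_filter_eq_self_of_forall_mem [DecidableEq β] {f : α → β} {S : Multiset α}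
    {D : Finset β} (h : ∀ a ∈ S, f a ∈ D) : ∑ d ∈ D, S.filter (f · = d) = S := by
  classical
  ext a
  by_cases ha : a ∈ S
  · simp [Multiset.count_sum', Multiset.count_filter, h a ha]
  · simp [Multiset.count_sum', Multiset.count_filter, Multiset.count_eq_zero_of_notMem ha]

end Multiset

section AddCommGroup

variable {G : Type*} [AddCommGroup G] {S T U : Multiset G} {g : G} {a b n : ℕ}

lemma eq_zero_of_coprime_nsmul_eq_zero (hab : a.Coprime b) (ha : a • g = 0) (hb : b • g = 0) :
    g = 0 :=
  AddMonoid.addOrderOf_eq_one_iff.1 <| Nat.eq_one_of_dvd_coprimes hab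
    (addOrderOf_dvd_of_nsmul_eq_zero ha) (addOrderOf_dvd_of_nsmul_eq_zero hb)

lemma nsmul_sum_eq_zero (h : ∀ g ∈ S, n • g = 0) : n • S.sum = 0 := by
  rw [← Multiset.map_id' S, ← Multiset.sum_map_nsmul, Multiset.map_congr rfl h]
  simp

lemma nsmul_eq_zero_of_addOrderOf_eq (h : addOrderOf g = n) : n • g = 0 :=
  h ▸ addOrderOf_nsmul_eq_zero g

/-! ### Zero-sum free sequences -/

namespace IsZeroSumFree

lemma mono (hS : IsZeroSumFree S) (h : T ≤ S) : IsZeroSumFree T :=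
  fun U hU => hS U (hU.trans h)

lemma ne_zero_of_mem (hS : IsZeroSumFree S) (hg : g ∈ S) : g ≠ 0 := by
  simpa using hS {g} (by simpa using hg) (by simp)

lemma sum_cons (h : IsZeroSumFree (U + T)) (hU : U ≠ 0) : IsZeroSumFree (U.sum ::ₘ T) := by
  intro V hV hV0 hsum
  by_cases hmem : U.sum ∈ V
  · obtain ⟨W, rfl⟩ := Multiset.exists_cons_of_mem hmem
    have hW : W ≤ T := (Multiset.cons_le_cons_iff _).1 hV
    exact h (U + W) (by gcongr) (fun h0 => hU (add_eq_zero.1 h0).1) (by simpa using hsum)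
  · have hVT : V ≤ T := (Multiset.le_cons_of_notMem hmem).1 hV
    exact h V (hVT.trans (Multiset.le_add_left _ _)) hV0 hsum

lemma add_of_coprime (hS : IsZeroSumFree S) (hT : IsZeroSumFree T) (hab : a.Coprime b)
    (ha : ∀ g ∈ S, a • g = 0) (hb : ∀ g ∈ T, b • g = 0) : IsZeroSumFree (S + T) := by
  intro V hV hV0 hsum
  obtain ⟨A, hA, B, hB, rfl⟩ := exists_add_eq_of_le_add hV
  rw [Multiset.sum_add] at hsum
  have haA : a • A.sum = 0 := nsmul_sum_eq_zero fun g hg => ha g (Multiset.mem_of_le hA hg)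
  have hbB : b • B.sum = 0 := nsmul_sum_eq_zero fun g hg => hb g (Multiset.mem_of_le hB hg)
  have hA0 : A.sum = 0 := eq_zero_of_coprime_nsmul_eq_zero hab haA <| by
    rw [eq_neg_of_add_eq_zero_left hsum, smul_neg, hbB, neg_zero]
  have hB0 : B.sum = 0 := by rwa [hA0, zero_add] at hsum
  have hA' : A = 0 := by_contra fun h => hS A hA h hA0
  have hB' : B = 0 := by_contra fun h => hT B hB h hB0
  exact hV0 (by rw [hA', hB', add_zero])

lemma replicate_of_lt_addOrderOf (h : n < addOrderOf g) :
    IsZeroSumFree (Multiset.replicate n g) := by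
  intro T hT hT0 hsum
  obtain ⟨k, hk, rfl⟩ := Multiset.le_replicate_iff.1 hT
  rw [Multiset.sum_replicate] at hsum
  have hk0 : k ≠ 0 := by rintro rfl; simp at hT0
  have := Nat.le_of_dvd (Nat.pos_of_ne_zero hk0) (addOrderOf_dvd_of_nsmul_eq_zero hsum)
  omega

/-- Two of the partial sums of a sequence of length at least `|H|` coincide. -/
lemma card_lt_natCard {H : AddSubgroup G} [Finite H] (hS : IsZeroSumFree S)
    (hH : ∀ g ∈ S, g ∈ H) : S.card < Nat.card H := by
  induction S using Quotient.inductionOn with | _ L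
  let partialSum (i : Fin (L.length + 1)) : H :=
    ⟨(L.take i).sum, list_sum_mem fun g hg => hH g (List.mem_of_mem_take hg)⟩
  suffices hinj : Function.Injective partialSum by
    simpa using Nat.card_le_card_of_injective _ hinj
  intro i j heq
  by_contra hne
  wlog hij : i < j generalizing i j
  · exact this heq.symm (Ne.symm hne) (lt_of_le_of_ne (not_lt.1 hij) (Ne.symm hne))
  have hsum : (L.take i).sum = (L.take j).sum := congrArg Subtype.val heq
  refine hS ((L.take j).drop i : List G) ?_ ?_ ?_
  · exact Multiset.coe_le.2 ((List.drop_sublist _ _).trans (List.take_sublist _ _)).subperm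
  · have := j.isLt
    simp only [ne_eq, Multiset.coe_eq_zero, List.drop_eq_nil_iff, List.length_take]
    omega
  · have h := List.sum_take_add_sum_drop (L.take j) i
    rw [List.take_take, min_eq_left (Nat.le_of_lt hij), hsum] at h
    simpa using h

end IsZeroSumFree

/-! ### Cross numbers -/

lemma crossNum_add (S T : Multiset G) : crossNum (S + T) = crossNum S + crossNum T := by
  simp [crossNum]

lemma crossNum_cons (g : G) (S : Multiset G) :
    crossNum (g ::ₘ S) = (addOrderOf g : ℝ)⁻¹ + crossNum S := by
  simp [crossNum]

lemma crossNum_sum {ι : Type*} (D : Finset ι) (S : ι → Multiset G) :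
    crossNum (∑ i ∈ D, S i) = ∑ i ∈ D, crossNum (S i) :=
  map_sum (AddMonoidHom.mk' (M := Multiset G) crossNum crossNum_add) S D

lemma crossNum_of_forall_addOrderOf_eq (h : ∀ g ∈ S, addOrderOf g = n) :
    crossNum S = S.card * (n : ℝ)⁻¹ := by
  rw [crossNum, Multiset.map_congr rfl fun g hg => by rw [h g hg]]
  simp

/-- The number of terms of order `d` in the sequence `S`, with multiplicity. -/
noncomputable def orderCount (S : Multiset G) (d : ℕ) : ℕ :=
  (S.filter (addOrderOf · = d)).card

lemma crossNum_eq_sum_orderCount {D : Finset ℕ} (h : ∀ g ∈ S, addOrderOf g ∈ D) :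
    crossNum S = ∑ d ∈ D, orderCount S d * (d : ℝ)⁻¹ := by
  conv_lhs => rw [← sum_filter_eq_self_of_forall_mem h, crossNum_sum]
  exact Finset.sum_congr rfl fun d _ =>
    crossNum_of_forall_addOrderOf_eq fun g hg => (Multiset.mem_filter.1 hg).2

lemma IsZeroSumFree.orderCount_one (hS : IsZeroSumFree S) : orderCount S 1 = 0 := by
  simp only [orderCount, Multiset.card_eq_zero, Multiset.filter_eq_nil,
    AddMonoid.addOrderOf_eq_one_iff]
  exact fun g hg => hS.ne_zero_of_mem hg

lemma addOrderOf_nsmul_eq_of_crossNum_map_le [Finite G]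
    (h : crossNum (S.map (n • ·)) ≤ crossNum S) : ∀ g ∈ S, addOrderOf (n • g) = addOrderOf g := by
  have hle (g : G) : addOrderOf (n • g) ≤ addOrderOf g :=
    Nat.le_of_dvd (addOrderOf_pos g) (addOrderOf_smul_dvd n)
  have hpos (g : G) : (0 : ℝ) < addOrderOf (n • g) := by exact_mod_cast addOrderOf_pos (n • g)
  by_contra! ⟨g, hg, hne⟩
  refine h.not_gt ?_
  rw [crossNum, crossNum, Multiset.map_map]
  refine Multiset.sum_lt_sum (fun x _ => ?_) ⟨g, hg, ?_⟩
  · exact inv_anti₀ (hpos x) (by exact_mod_cast hle x)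
  · exact inv_strictAnti₀ (hpos g) (by exact_mod_cast (hle g).lt_of_ne hne)

lemma crossNum_le_crossNum_map_nsmul [Finite G] (S : Multiset G) (n : ℕ) :
    crossNum S ≤ crossNum (S.map (n • ·)) := by
  rw [crossNum, crossNum, Multiset.map_map]
  refine Multiset.sum_map_le_sum_map _ _ fun g _ => ?_
  exact inv_anti₀ (by exact_mod_cast addOrderOf_pos (n • g))
    (by exact_mod_cast Nat.le_of_dvd (addOrderOf_pos g) (addOrderOf_smul_dvd n))

end AddCommGroup

/-! ### Two arithmetic functions -/

section Arithmetic

variable {n p e : ℕ}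

/-- The constant `k*(C_n)` for squarefree `n`: the cross number of a sequence consisting of
`p - 1` terms of order `p` for every prime `p ∣ n`. -/
noncomputable def kStar (n : ℕ) : ℝ :=
  ∑ p ∈ n.primeFactors, (1 - (p : ℝ)⁻¹)

/-- The cross number of a sequence with exactly `minFac d - 1` terms of each order `d ∣ n`. The
divisor `d = 1` contributes `0` because `Nat.minFac 1 = 1`. -/
noncomputable def minFacSum (n : ℕ) : ℝ :=
  ∑ d ∈ n.divisors, ((d.minFac : ℝ) - 1) * (d : ℝ)⁻¹

lemma kStar_add_sum_inv (n : ℕ) :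
    kStar n + ∑ p ∈ n.primeFactors, (p : ℝ)⁻¹ = n.primeFactors.card := by
  simp [kStar]

lemma primeFactors_prime_mul (hp : p.Prime) (hpe : p.Coprime e) :
    (p * e).primeFactors = insert p e.primeFactors := by
  rw [hpe.primeFactors_mul, hp.primeFactors, Finset.insert_eq]

lemma kStar_prime_mul (hp : p.Prime) (hpe : p.Coprime e) :
    kStar (p * e) = 1 - (p : ℝ)⁻¹ + kStar e := by
  have hp' : p ∉ e.primeFactors := fun h =>
    (hp.coprime_iff_not_dvd.1 hpe) (Nat.dvd_of_mem_primeFactors h)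
  rw [kStar, primeFactors_prime_mul hp hpe, Finset.sum_insert hp', kStar]

lemma sum_divisors_prime_mul {M : Type*} [AddCommMonoid M] (hp : p.Prime) (hpe : p.Coprime e)
    (f : ℕ → M) :
    ∑ d ∈ (p * e).divisors, f d = ∑ d ∈ e.divisors, f d + ∑ d ∈ e.divisors, f (p * d) := by
  rw [Nat.divisors_mul, Finset.mul_def, Finset.sum_image hpe.mul_injOn_divisors,
    Finset.sum_product, hp.sum_divisors, add_comm]
  simp only [one_mul]

lemma sum_inv_divisors_prime_mul (hp : p.Prime) (hpe : p.Coprime e) :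
    ∑ d ∈ (p * e).divisors, (d : ℝ)⁻¹ = (1 + (p : ℝ)⁻¹) * ∑ d ∈ e.divisors, (d : ℝ)⁻¹ := by
  simp only [sum_divisors_prime_mul hp hpe, Nat.cast_mul, mul_inv, ← Finset.mul_sum]
  ring

lemma minFac_prime_mul (hp : p.Prime) (h : ∀ q, q.Prime → q ∣ e → p ≤ q) :
    (p * e).minFac = p := by
  refine le_antisymm (Nat.minFac_le_of_dvd hp.two_le (dvd_mul_right p e)) ?_
  have hq := Nat.minFac_prime (n := p * e) (fun h1 => hp.ne_one (Nat.eq_one_of_mul_eq_one_right h1))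
  rcases hq.dvd_mul.1 (p * e).minFac_dvd with hdvd | hdvd
  · exact ((Nat.prime_dvd_prime_iff_eq hq hp).1 hdvd).ge
  · exact h _ hq hdvd

lemma minFacSum_prime_mul (hp : p.Prime) (h : ∀ q, q.Prime → q ∣ e → p < q) :
    minFacSum (p * e) =
      minFacSum e + (1 - (p : ℝ)⁻¹) * ∑ d ∈ e.divisors, (d : ℝ)⁻¹ := by
  have hpe : p.Coprime e := hp.coprime_iff_not_dvd.2 fun hdvd => (h p hp hdvd).false
  have hp0 : (p : ℝ) ≠ 0 := by exact_mod_cast hp.ne_zero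
  rw [minFacSum, sum_divisors_prime_mul hp hpe, ← minFacSum, Finset.mul_sum]
  congr 1
  refine Finset.sum_congr rfl fun d hd => ?_
  rw [minFac_prime_mul hp fun q hq hqd => (h q hq (hqd.trans (Nat.dvd_of_mem_divisors hd))).le]
  push_cast
  field_simp

lemma minFacSum_prime (hp : p.Prime) : minFacSum p = 1 - (p : ℝ)⁻¹ := by
  simp [minFacSum, hp.sum_divisors, hp.minFac_eq, sub_mul, hp.ne_zero]

lemma minFacSum_mul_of_prime {q : ℕ} (hp : p.Prime) (hq : q.Prime) (hpq : p < q) :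
    minFacSum (p * q) = 1 - (q : ℝ)⁻¹ + (1 - (p : ℝ)⁻¹) * (1 + (q : ℝ)⁻¹) := by
  rw [minFacSum_prime_mul hp, minFacSum_prime hq, hq.sum_divisors]
  · simp [add_comm]
  · intro x hx hxq
    rwa [(Nat.prime_dvd_prime_iff_eq hx hq).1 hxq]

lemma minFacSum_mul_mul_of_prime {q r : ℕ} (hp : p.Prime) (hq : q.Prime) (hr : r.Prime)
    (hpq : p < q) (hqr : q < r) :
    minFacSum (p * (q * r)) = 1 - (r : ℝ)⁻¹ + (1 - (q : ℝ)⁻¹) * (1 + (r : ℝ)⁻¹) +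
      (1 - (p : ℝ)⁻¹) * ((1 + (q : ℝ)⁻¹) * (1 + (r : ℝ)⁻¹)) := by
  rw [minFacSum_prime_mul hp, minFacSum_mul_of_prime hq hr hqr,
    sum_inv_divisors_prime_mul hq ((Nat.coprime_primes hq hr).2 hqr.ne), hr.sum_divisors]
  · simp [add_comm]
  · intro x hx hxqr
    rcases hx.dvd_mul.1 hxqr with h | h
    · rwa [(Nat.prime_dvd_prime_iff_eq hx hq).1 h]
    · rw [(Nat.prime_dvd_prime_iff_eq hx hr).1 h]
      exact hpq.trans hqr

lemma minFacSum_lt_card_primeFactors (hn : Squarefree n) (h1 : n ≠ 1)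
    (h3 : n.primeFactors.card ≤ 3) : minFacSum n < n.primeFactors.card := by
  have hprod := Nat.prod_primeFactorsList hn.ne_zero
  have hprime (p : ℕ) (hp : p ∈ n.primeFactorsList) := Nat.prime_of_mem_primeFactorsList hp
  have hsorted := n.primeFactorsList_sorted.sortedLT_of_nodup hn.nodup_primeFactorsList
  have hcard : n.primeFactors.card = n.primeFactorsList.length :=
    List.toFinset_card_of_nodup hn.nodup_primeFactorsList
  have hinv {p : ℕ} (hp : p.Prime) : (0 : ℝ) < (p : ℝ)⁻¹ := inv_pos.2 (by exact_mod_cast hp.pos)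
  rw [hcard] at h3 ⊢
  rw [List.sortedLT_iff_pairwise] at hsorted
  rcases hl : n.primeFactorsList with _ | ⟨p, _ | ⟨q, _ | ⟨r, _ | ⟨s, l⟩⟩⟩⟩ <;>
    rw [hl] at hprod hprime hsorted h3 <;> rw [← hprod]
  · exact absurd hprod.symm h1
  · have hp : p.Prime := by simpa using hprime
    simp [minFacSum_prime hp, hp.pos]
  · obtain ⟨hp, hq⟩ : p.Prime ∧ q.Prime := by simpa using hprime
    have hpq : p < q := by simpa using hsorted
    simp only [List.prod_cons, List.prod_nil, mul_one, List.length_cons, List.length_nil]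
    rw [minFacSum_mul_of_prime hp hq hpq]
    push_cast
    nlinarith [hinv hp, mul_pos (hinv hp) (hinv hq)]
  · obtain ⟨hp, hq, hr⟩ : p.Prime ∧ q.Prime ∧ r.Prime := by simpa using hprime
    obtain ⟨⟨hpq, hpr⟩, hqr⟩ : (p < q ∧ p < r) ∧ q < r := by simpa using hsorted
    have hrp : (r : ℝ)⁻¹ < (p : ℝ)⁻¹ :=
      inv_strictAnti₀ (by exact_mod_cast hp.pos) (by exact_mod_cast hpr)
    simp only [List.prod_cons, List.prod_nil, mul_one, List.length_cons, List.length_nil]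
    rw [minFacSum_mul_mul_of_prime hp hq hr hpq hqr]
    push_cast
    nlinarith [mul_pos (hinv hp) (hinv hq), mul_pos (hinv hp) (hinv hr),
      mul_pos (mul_pos (hinv hp) (hinv hq)) (hinv hr)]
  · simp only [List.length_cons] at h3
    omega

lemma minFacSum_lt_card_primeFactors_of_dvd {m : ℕ} (hn : Squarefree n)
    (h3 : n.primeFactors.card ≤ 3) (hm : m ∣ n) (hm1 : m ≠ 1) :
    minFacSum m < m.primeFactors.card :=
  minFacSum_lt_card_primeFactors (hn.squarefree_of_dvd hm) hm1 <|
    (Finset.card_le_card (Nat.primeFactors_mono hm hn.ne_zero)).trans h3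

end Arithmetic

/-! ### Zero-sum free sequences over finite cyclic groups -/

/-- The statement proved by induction on `n`: every zero-sum free sequence over `G` with terms of
order dividing `n` and cross number at least `k*(C_n)` consists of terms of prime order. -/
def ExtremalsHavePrimeOrder (G : Type*) [AddCommGroup G] (n : ℕ) : Prop :=
  ∀ S : Multiset G, IsZeroSumFree S → (∀ g ∈ S, addOrderOf g ∣ n) → kStar n ≤ crossNum S →
    ∀ g ∈ S, (addOrderOf g).Prime

lemma exists_le_orderCount_of_kStar_le_crossNum {G : Type*} [AddCommGroup G]
    {S : Multiset G} {n : ℕ} (hlt : minFacSum n < n.primeFactors.card) (hS : IsZeroSumFree S)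
    (hord : ∀ g ∈ S, addOrderOf g ∣ n) (hk : kStar n ≤ crossNum S) :
    (∃ p ∈ n.primeFactors, p ≤ orderCount S p + 1) ∨
      ∃ d, d ∣ n ∧ d ≠ 1 ∧ d.minFac ≤ orderCount S d := by
  by_contra! ⟨hprime, hdvd⟩
  have hn : n ≠ 0 := by
    rintro rfl
    simp [minFacSum] at hlt
  have hterm : ∀ d ∈ n.divisors,
      orderCount S d * (d : ℝ)⁻¹ + (if d.Prime then (d : ℝ)⁻¹ else 0) ≤
        ((d.minFac : ℝ) - 1) * (d : ℝ)⁻¹ := by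
    intro d hd
    have hdn := Nat.dvd_of_mem_divisors hd
    split_ifs with hdp
    · have : (orderCount S d : ℝ) + 1 + 1 ≤ d := by
        exact_mod_cast hprime d (Nat.mem_primeFactors.2 ⟨hdp, hdn, hn⟩)
      rw [hdp.minFac_eq, ← add_one_mul]
      gcongr
      linarith
    · rw [add_zero]
      gcongr
      rw [le_sub_iff_add_le]
      rcases eq_or_ne d 1 with rfl | hd1
      · simp [hS.orderCount_one]
      · exact_mod_cast hdvd d hdn hd1
  refine lt_irrefl (n.primeFactors.card : ℝ) ?_
  calc (n.primeFactors.card : ℝ) = kStar n + ∑ p ∈ n.primeFactors, (p : ℝ)⁻¹ :=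
        (kStar_add_sum_inv n).symm
    _ ≤ crossNum S + ∑ p ∈ n.primeFactors, (p : ℝ)⁻¹ := by gcongr
    _ = ∑ d ∈ n.divisors,
        (orderCount S d * (d : ℝ)⁻¹ + if d.Prime then (d : ℝ)⁻¹ else 0) := by
      rw [crossNum_eq_sum_orderCount (D := n.divisors) (by simpa [hn] using hord),
        Finset.sum_add_distrib, Nat.primeFactors_eq_to_filter_divisors_prime, Finset.sum_filter]
    _ ≤ minFacSum n := Finset.sum_le_sum hterm
    _ < n.primeFactors.card := hlt

section Cyclic

variable {G : Type*} [AddCommGroup G] [Finite G] [IsAddCyclic G] {S A B : Multiset G} {n d p e : ℕ}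

namespace IsZeroSumFree

lemma card_lt_of_forall_nsmul_eq_zero (hS : IsZeroSumFree S) (hn : 0 < n)
    (h : ∀ g ∈ S, n • g = 0) : S.card < n := by
  classical
  have := Fintype.ofFinite G
  calc S.card < Nat.card (nsmulAddMonoidHom (α := G) n).ker := hS.card_lt_natCard h
    _ = (Finset.univ.filter fun g : G => n • g = 0).card := by
      rw [Nat.card_eq_fintype_card, Fintype.card_of_subtype]
      simp [AddMonoidHom.mem_ker]
    _ ≤ n := IsAddCyclic.card_nsmul_eq_zero_le hn

lemma orderCount_lt (hS : IsZeroSumFree S) (hd : 0 < d) : orderCount S d < d :=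
  (hS.mono (Multiset.filter_le _ S)).card_lt_of_forall_nsmul_eq_zero hd fun _ hg =>
    nsmul_eq_zero_of_addOrderOf_eq (Multiset.mem_filter.1 hg).2

lemma orderCount_mul_inv_le (hS : IsZeroSumFree S) (hd : 0 < d) :
    orderCount S d * (d : ℝ)⁻¹ ≤ 1 - (d : ℝ)⁻¹ := by
  have hd' : (0 : ℝ) < d := by exact_mod_cast hd
  have hlt : (orderCount S d : ℝ) + 1 ≤ d := by exact_mod_cast hS.orderCount_lt hd
  field_simp
  linarith

lemma crossNum_le_kStar (hS : IsZeroSumFree S) (h : ∀ g ∈ S, addOrderOf g ∈ n.primeFactors) :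
    crossNum S ≤ kStar n := by
  rw [crossNum_eq_sum_orderCount h]
  exact Finset.sum_le_sum fun p hp => hS.orderCount_mul_inv_le (Nat.pos_of_mem_primeFactors hp)

lemma orderCount_add_one_eq (hS : IsZeroSumFree S) (h : ∀ g ∈ S, addOrderOf g ∈ n.primeFactors)
    (hk : kStar n ≤ crossNum S) (hp : p ∈ n.primeFactors) : orderCount S p + 1 = p := by
  have hle (q : ℕ) (hq : q ∈ n.primeFactors) : orderCount S q * (q : ℝ)⁻¹ ≤ 1 - (q : ℝ)⁻¹ :=
    hS.orderCount_mul_inv_le (Nat.pos_of_mem_primeFactors hq)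
  rw [crossNum_eq_sum_orderCount h] at hk
  have heq := (Finset.sum_eq_sum_iff_of_le hle).1 (hk.antisymm' (Finset.sum_le_sum hle)) p hp
  have hp0 : (p : ℝ) ≠ 0 := by exact_mod_cast (Nat.prime_of_mem_primeFactors hp).ne_zero
  field_simp at heq
  exact_mod_cast (eq_sub_iff_add_eq.1 heq)

lemma map_nsmul_of_add (h : IsZeroSumFree (A + B)) (hn : 0 < n) (hA : ∀ g ∈ A, n • g = 0)
    (hcard : n ≤ A.card + 1) : IsZeroSumFree (B.map (n • ·)) := by
  intro V hV hV0 hsum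
  obtain ⟨W, hW, rfl⟩ := exists_le_map_eq_of_le_map hV
  rw [Multiset.sum_map_nsmul, Multiset.map_id'] at hsum
  have hfree : IsZeroSumFree (W.sum ::ₘ A) := by
    refine (h.mono ?_).sum_cons (T := A) (U := W) (by rintro rfl; simp at hV0)
    rw [add_comm]
    gcongr
  have := hfree.card_lt_of_forall_nsmul_eq_zero hn (by simpa [hsum] using hA)
  rw [Multiset.card_cons] at this
  omega

end IsZeroSumFree

lemma exists_le_sum_eq_zero (hn : 0 < n) (h : ∀ g ∈ S, n • g = 0) (hcard : n ≤ S.card) :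
    ∃ T ≤ S, T ≠ 0 ∧ T.sum = 0 := by
  by_contra! hS
  exact (IsZeroSumFree.card_lt_of_forall_nsmul_eq_zero hS hn h).not_ge hcard

/-- Multiplication by `e` maps `p` terms of order `p * e` into the subgroup of order `p`, so the
images of some of them sum to zero. -/
lemma exists_le_addOrderOf_sum_dvd (hp : 1 < p) (he : 0 < e) (hcount : p ≤ orderCount S (p * e)) :
    ∃ U ≤ S, 1 < U.card ∧ addOrderOf U.sum ∣ e ∧ crossNum U ≤ (addOrderOf U.sum : ℝ)⁻¹ := by
  obtain ⟨T, hT, hTcard⟩ := exists_le_card_eq_of_le_card hcount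
  have hTord (g : G) (hg : g ∈ T) : addOrderOf g = p * e :=
    (Multiset.mem_filter.1 (Multiset.mem_of_le hT hg)).2
  obtain ⟨V, hV, hV0, hVsum⟩ := exists_le_sum_eq_zero (S := T.map (e • ·)) (n := p) (by omega)
    (by simpa [← mul_nsmul'] using fun g hg => nsmul_eq_zero_of_addOrderOf_eq (hTord g hg))
    (by simp [hTcard])
  obtain ⟨U, hU, rfl⟩ := exists_le_map_eq_of_le_map hV
  have hUord (g : G) (hg : g ∈ U) : addOrderOf g = p * e := hTord g (Multiset.mem_of_le hU hg)
  rw [Multiset.sum_map_nsmul, Multiset.map_id'] at hVsum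
  have hsum : addOrderOf U.sum ∣ e := addOrderOf_dvd_of_nsmul_eq_zero hVsum
  refine ⟨U, hU.trans (hT.trans (Multiset.filter_le _ S)), ?_, hsum, ?_⟩
  · have hUpos : 0 < U.card := Multiset.card_pos.2 (by rintro rfl; simp at hV0)
    refine lt_of_le_of_ne hUpos fun h1 => ?_
    obtain ⟨u, rfl⟩ := Multiset.card_eq_one.1 h1.symm
    rw [Multiset.sum_singleton, hUord u (by simp)] at hsum
    exact (Nat.le_of_dvd he hsum).not_gt (lt_mul_left he hp)
  · have hUcard : (U.card : ℝ) ≤ p := by exact_mod_cast hTcard ▸ Multiset.card_le_card hU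
    have hp0 : (p : ℝ) ≠ 0 := by exact_mod_cast (by omega : p ≠ 0)
    calc crossNum U = U.card * ((p * e : ℕ) : ℝ)⁻¹ := crossNum_of_forall_addOrderOf_eq hUord
      _ ≤ p * ((p * e : ℕ) : ℝ)⁻¹ := by gcongr
      _ = (e : ℝ)⁻¹ := by push_cast; field_simp
      _ ≤ (addOrderOf U.sum : ℝ)⁻¹ := inv_anti₀ (by exact_mod_cast addOrderOf_pos U.sum)
        (by exact_mod_cast Nat.le_of_dvd he hsum)

namespace ExtremalsHavePrimeOrder

lemma crossNum_le_kStar (h : ExtremalsHavePrimeOrder G n) (hn : n ≠ 0) (hS : IsZeroSumFree S)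
    (hord : ∀ g ∈ S, addOrderOf g ∣ n) : crossNum S ≤ kStar n := by
  by_contra! hlt
  exact hlt.not_ge <| hS.crossNum_le_kStar fun g hg =>
    Nat.mem_primeFactors.2 ⟨h S hS hord hlt.le g hg, hord g hg, hn⟩

/-- Multiplication by `p` kills the terms of order `p` and, as `k(S)` is too large for any order to
drop, preserves the orders of the others. -/
lemma forall_prime_of_le_orderCount_add_one (h : ExtremalsHavePrimeOrder G e)
    (hp : p.Prime) (hpe : p.Coprime e) (hS : IsZeroSumFree S)
    (hord : ∀ g ∈ S, addOrderOf g ∣ p * e) (hk : kStar (p * e) ≤ crossNum S)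
    (hfull : p ≤ orderCount S p + 1) : ∀ g ∈ S, (addOrderOf g).Prime := by
  set A := S.filter (addOrderOf · = p)
  set B := S.filter (¬ addOrderOf · = p)
  have hAB : A + B = S := Multiset.filter_add_not _ S
  have hA (g : G) (hg : g ∈ A) : addOrderOf g = p := (Multiset.mem_filter.1 hg).2
  have hC : IsZeroSumFree (B.map (p • ·)) :=
    IsZeroSumFree.map_nsmul_of_add (hAB ▸ hS) hp.pos
      (fun g hg => nsmul_eq_zero_of_addOrderOf_eq (hA g hg)) hfull
  have hCord : ∀ g ∈ B.map (p • ·), addOrderOf g ∣ e := by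
    simp only [Multiset.forall_mem_map_iff]
    intro g hg
    refine addOrderOf_dvd_of_nsmul_eq_zero ?_
    rw [← mul_nsmul]
    exact addOrderOf_dvd_iff_nsmul_eq_zero.1 (hord g (Multiset.mem_of_mem_filter hg))
  have hkA : crossNum A ≤ 1 - (p : ℝ)⁻¹ := by
    rw [crossNum_of_forall_addOrderOf_eq hA]
    exact hS.orderCount_mul_inv_le hp.pos
  have hkB : kStar e ≤ crossNum B := by
    rw [kStar_prime_mul hp hpe, ← hAB, crossNum_add] at hk
    linarith
  have he : e ≠ 0 := by
    rintro rfl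
    exact hp.ne_one ((Nat.coprime_zero_right p).1 hpe)
  have hsame := addOrderOf_nsmul_eq_of_crossNum_map_le
    ((h.crossNum_le_kStar he hC hCord).trans hkB)
  have hCprime := h _ hC hCord (hkB.trans (crossNum_le_crossNum_map_nsmul B p))
  intro g hg
  rw [← hAB, Multiset.mem_add] at hg
  rcases hg with hgA | hgB
  · rwa [hA g hgA]
  · rw [← hsame g hgB]
    exact hCprime _ (Multiset.mem_map_of_mem _ hgB)

end ExtremalsHavePrimeOrder

/-- Merge some terms of order `p * e` into their sum. By `hshort` the shorter sequence has `p - 1`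
terms of order `p`, and the new term is not one of them, its order being prime to `p`. -/
lemma le_orderCount_add_one_of_le_orderCount_mul (hn : Squarefree n) (hS : IsZeroSumFree S)
    (hord : ∀ g ∈ S, addOrderOf g ∣ n) (hk : kStar n ≤ crossNum S) (hp : p.Prime)
    (hpe : p * e ∣ n) (hcount : p ≤ orderCount S (p * e))
    (hshort : ∀ T : Multiset G, T.card < S.card → IsZeroSumFree T → (∀ g ∈ T, addOrderOf g ∣ n) →
      kStar n ≤ crossNum T → ∀ g ∈ T, (addOrderOf g).Prime) :
    p ≤ orderCount S p + 1 := by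
  have hcop : p.Coprime e := Nat.coprime_of_squarefree_mul (hn.squarefree_of_dvd hpe)
  have he : 0 < e := Nat.pos_of_dvd_of_pos ((dvd_mul_left e p).trans hpe) hn.ne_zero.bot_lt
  obtain ⟨U, hUS, hUcard, hUsum, hUk⟩ := exists_le_addOrderOf_sum_dvd hp.one_lt he hcount
  obtain ⟨R, rfl⟩ := Multiset.le_iff_exists_add.1 hUS
  have hfree : IsZeroSumFree (U.sum ::ₘ R) := hS.sum_cons (by rintro rfl; simp at hUcard)
  have hord' : ∀ g ∈ U.sum ::ₘ R, addOrderOf g ∣ n := by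
    simp only [Multiset.forall_mem_cons]
    exact ⟨(hUsum.trans (dvd_mul_left e p)).trans hpe, fun g hg => hord g (by simp [hg])⟩
  have hk' : kStar n ≤ crossNum (U.sum ::ₘ R) := by
    rw [crossNum_add] at hk
    rw [crossNum_cons]
    linarith
  have hprime := hshort _ (by simpa [add_comm R.card] using hUcard) hfree hord' hk'
  have hfull : orderCount (U.sum ::ₘ R) p + 1 = p := hfree.orderCount_add_one_eq (n := n)
    (fun g hg => Nat.mem_primeFactors.2 ⟨hprime g hg, hord' g hg, hn.ne_zero⟩) hk'
    (Nat.mem_primeFactors.2 ⟨hp, (dvd_mul_right p e).trans hpe, hn.ne_zero⟩)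
  have hne : addOrderOf U.sum ≠ p := fun h =>
    hp.ne_one (Nat.eq_one_of_dvd_coprimes hcop dvd_rfl (h ▸ hUsum))
  rw [orderCount, Multiset.filter_cons_of_neg (p := (addOrderOf · = p)) _ hne] at hfull
  rw [orderCount, Multiset.filter_add, Multiset.card_add]
  omega

namespace ExtremalsHavePrimeOrder

lemma of_forall_prime_mul (hn : Squarefree n) (hlt : minFacSum n < n.primeFactors.card)
    (hquot : ∀ p e, p.Prime → n = p * e → ExtremalsHavePrimeOrder G e) :
    ExtremalsHavePrimeOrder G n := by
  intro S
  induction hcard : S.card using Nat.strong_induction_on generalizing S with | _ m ih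
  subst hcard
  intro hS hord hk
  obtain ⟨p, hpn, hfull⟩ : ∃ p ∈ n.primeFactors, p ≤ orderCount S p + 1 := by
    rcases exists_le_orderCount_of_kStar_le_crossNum hlt hS hord hk with
      h | ⟨d, hdn, hd1, hcount⟩
    · exact h
    · obtain ⟨e, he⟩ := d.minFac_dvd
      have hp := Nat.minFac_prime hd1
      refine ⟨d.minFac, Nat.mem_primeFactors.2 ⟨hp, d.minFac_dvd.trans hdn, hn.ne_zero⟩, ?_⟩
      exact le_orderCount_add_one_of_le_orderCount_mul hn hS hord hk hp (he ▸ hdn) (he ▸ hcount)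
        fun T hT => ih T.card hT T rfl
  obtain ⟨hp, ⟨e, rfl⟩, -⟩ := Nat.mem_primeFactors.1 hpn
  exact (hquot p e hp rfl).forall_prime_of_le_orderCount_add_one
    hp (Nat.coprime_of_squarefree_mul hn) hS hord hk hfull

lemma of_squarefree (hn : Squarefree n)
    (hlt : ∀ m, m ∣ n → m ≠ 1 → minFacSum m < m.primeFactors.card) :
    ExtremalsHavePrimeOrder G n := by
  induction n using Nat.strong_induction_on with | _ n ih
  rcases eq_or_ne n 1 with rfl | hn1
  · intro S hS hord _ g hg
    exact absurd (by simpa using hord g hg) (hS.ne_zero_of_mem hg)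
  · refine of_forall_prime_mul hn (hlt n dvd_rfl hn1) ?_
    rintro p e hp rfl
    have he : 0 < e := Nat.pos_of_ne_zero (right_ne_zero_of_mul hn.ne_zero)
    exact ih e (lt_mul_left he hp.one_lt) hn.of_mul_right
      fun m hm => hlt m (hm.trans (dvd_mul_left e p))

end ExtremalsHavePrimeOrder

end Cyclic

/-! ### The little cross number -/

section Finite

variable (G : Type*) [AddCommGroup G] [Finite G]

lemma exists_isZeroSumFree_crossNum_eq_sum {P : Finset ℕ} (hP : P ⊆ (Nat.card G).primeFactors) :
    ∃ S : Multiset G, IsZeroSumFree S ∧ (∀ g ∈ S, (∏ p ∈ P, p) • g = 0) ∧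
      crossNum S = ∑ p ∈ P, (1 - (p : ℝ)⁻¹) := by
  induction P using Finset.induction_on with
  | empty =>
    exact ⟨0, fun T hT hT0 => absurd (Multiset.le_zero.1 hT) hT0, by simp, by simp [crossNum]⟩
  | insert p P hpP ih =>
    rw [Finset.insert_subset_iff] at hP
    obtain ⟨S, hS, hSP, hSk⟩ := ih hP.2
    have hp : p.Prime := Nat.prime_of_mem_primeFactors hP.1
    have : Fact p.Prime := ⟨hp⟩
    obtain ⟨g, hg⟩ := exists_prime_addOrderOf_dvd_card' p (Nat.dvd_of_mem_primeFactors hP.1)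
    have hcop : p.Coprime (∏ q ∈ P, q) := Nat.Coprime.prod_right fun q hq =>
      (Nat.coprime_primes hp (Nat.prime_of_mem_primeFactors (hP.2 hq))).2
        (ne_of_mem_of_not_mem hq hpP).symm
    have hreplicate (x : G) (hx : x ∈ Multiset.replicate (p - 1) g) : addOrderOf x = p :=
      Multiset.eq_of_mem_replicate hx ▸ hg
    refine ⟨Multiset.replicate (p - 1) g + S, ?_, ?_, ?_⟩
    · refine IsZeroSumFree.add_of_coprime (.replicate_of_lt_addOrderOf ?_) hS hcop
        (fun x hx => nsmul_eq_zero_of_addOrderOf_eq (hreplicate x hx)) hSP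
      rw [hg]
      exact Nat.sub_one_lt hp.ne_zero
    · intro x hx
      rw [Finset.prod_insert hpP]
      rcases Multiset.mem_add.1 hx with hx | hx
      · rw [mul_comm, mul_nsmul', nsmul_eq_zero_of_addOrderOf_eq (hreplicate x hx), nsmul_zero]
      · rw [mul_nsmul', hSP x hx, nsmul_zero]
    · rw [Finset.sum_insert hpP, crossNum_add, hSk, crossNum_of_forall_addOrderOf_eq hreplicate,
        Multiset.card_replicate, Nat.cast_pred hp.pos, sub_mul, one_mul,
        mul_inv_cancel₀ (by exact_mod_cast hp.ne_zero)]

lemma exists_isZeroSumFree_crossNum_eq_kStar :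
    ∃ S : Multiset G, IsZeroSumFree S ∧ crossNum S = kStar (Nat.card G) := by
  obtain ⟨S, hS, -, hSk⟩ := exists_isZeroSumFree_crossNum_eq_sum G subset_rfl
  exact ⟨S, hS, hSk⟩

end Finite

section Cyclic

variable {G : Type*} [AddCommGroup G] [Finite G] [IsAddCyclic G]

lemma littleK_eq_kStar (h : ExtremalsHavePrimeOrder G (Nat.card G)) :
    littleK G = kStar (Nat.card G) := by
  refine IsGreatest.csSup_eq ⟨exists_isZeroSumFree_crossNum_eq_kStar G, ?_⟩
  rintro _ ⟨S, hS, rfl⟩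
  exact h.crossNum_le_kStar Nat.card_pos.ne' hS fun g _ => addOrderOf_dvd_natCard g

theorem maximal_zero_sum_free_splits_three_primes_general (hG : Squarefree (Nat.card G))
    (hlt : ∀ m, m ∣ Nat.card G → m ≠ 1 → minFacSum m < m.primeFactors.card) {S : Multiset G}
    (hS : IsZeroSumFree S) (hmax : crossNum S = littleK G) :
    ∃ T : ℕ → Multiset G, S = ∑ p ∈ (Nat.card G).primeFactors, T p ∧
      ∀ p, IsZeroSumFree (T p) ∧ ∀ g ∈ T p, p • g = 0 := by
  have h : ExtremalsHavePrimeOrder G (Nat.card G) := .of_squarefree hG hlt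
  have hprime := h S hS (fun g _ => addOrderOf_dvd_natCard g) (hmax.trans (littleK_eq_kStar h)).ge
  refine ⟨fun p => S.filter (addOrderOf · = p),
    (sum_filter_eq_self_of_forall_mem fun g hg => ?_).symm,
    fun p => ⟨hS.mono (Multiset.filter_le _ S), fun g hg => ?_⟩⟩
  · exact Nat.mem_primeFactors.2 ⟨hprime g hg, addOrderOf_dvd_natCard g, hG.ne_zero⟩
  · exact nsmul_eq_zero_of_addOrderOf_eq (Multiset.mem_filter.1 hg).2

end Cyclic

section ThreePrimes

variable {p q r : ℕ}

lemma isAddCyclic_zmod_prod (hpq : p.Coprime q) (hpr : p.Coprime r) (hqr : q.Coprime r) :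
    IsAddCyclic (ZMod p × ZMod q × ZMod r) := by
  simp only [AddGroup.isAddCyclic_prod_iff, Nat.card_prod, Nat.card_zmod]
  exact ⟨inferInstance, ⟨inferInstance, inferInstance, hqr⟩, hpq.mul_right hpr⟩

lemma squarefree_mul_mul_of_coprime (hp : Squarefree p) (hq : Squarefree q) (hr : Squarefree r)
    (hpq : p.Coprime q) (hpr : p.Coprime r) (hqr : q.Coprime r) : Squarefree (p * (q * r)) :=
  (Nat.squarefree_mul (hpq.mul_right hpr)).2 ⟨hp, (Nat.squarefree_mul hqr).2 ⟨hq, hr⟩⟩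

lemma primeFactors_mul_mul_of_prime (hp : p.Prime) (hq : q.Prime) (hr : r.Prime) :
    (p * (q * r)).primeFactors = {p, q, r} := by
  rw [Nat.primeFactors_mul hp.ne_zero (mul_ne_zero hq.ne_zero hr.ne_zero),
    Nat.primeFactors_mul hq.ne_zero hr.ne_zero, hp.primeFactors, hq.primeFactors, hr.primeFactors]
  rfl

lemma map_eq_zero_of_coprime_nsmul_eq_zero {G : Type*} [AddMonoid G] {m n : ℕ} {g : G}
    (f : G →+ ZMod n) (hmn : m.Coprime n) (hg : m • g = 0) : f g = 0 :=
  eq_zero_of_coprime_nsmul_eq_zero hmn (by rw [← map_nsmul, hg, map_zero]) (by simp)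

end ThreePrimes

/-- For distinct primes `p, q, r` and `G = C_p ⊕ C_q ⊕ C_r`: every zero-sum free
sequence `S` over `G` with `k(S) = k(G)` splits as `S = Sp + Sq + Sr` where `Sp`, `Sq`,
`Sr` are zero-sum free sequences supported on the `p`-, `q`- and `r`-primary
components of `G` respectively. -/
theorem maximal_zero_sum_free_splits_three_primes
    (p q r : ℕ) (hp : p.Prime) (hq : q.Prime) (hr : r.Prime)
    (hpq : p ≠ q) (hpr : p ≠ r) (hqr : q ≠ r)
    (S : Multiset (ZMod p × ZMod q × ZMod r)) (hS : IsZeroSumFree S)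
    (hmax : crossNum S = littleK (ZMod p × ZMod q × ZMod r)) :
    ∃ Sp Sq Sr : Multiset (ZMod p × ZMod q × ZMod r),
      S = Sp + Sq + Sr ∧
        (∀ x ∈ Sp, x.2 = 0) ∧
        (∀ x ∈ Sq, x.1 = 0 ∧ x.2.2 = 0) ∧
        (∀ x ∈ Sr, x.1 = 0 ∧ x.2.1 = 0) ∧
        IsZeroSumFree Sp ∧ IsZeroSumFree Sq ∧ IsZeroSumFree Sr := by
  have : Fact p.Prime := ⟨hp⟩
  have : Fact q.Prime := ⟨hq⟩
  have : Fact r.Prime := ⟨hr⟩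
  have hpq' := (Nat.coprime_primes hp hq).2 hpq
  have hpr' := (Nat.coprime_primes hp hr).2 hpr
  have hqr' := (Nat.coprime_primes hq hr).2 hqr
  have : IsAddCyclic (ZMod p × ZMod q × ZMod r) := isAddCyclic_zmod_prod hpq' hpr' hqr'
  have hcard : Nat.card (ZMod p × ZMod q × ZMod r) = p * (q * r) := by simp
  have hsq := hcard ▸ squarefree_mul_mul_of_coprime hp.prime.squarefree hq.prime.squarefree
    hr.prime.squarefree hpq' hpr' hqr'
  have hfactors := hcard ▸ primeFactors_mul_mul_of_prime hp hq hr
  obtain ⟨T, hST, hT⟩ := maximal_zero_sum_free_splits_three_primes_general hsq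
    (fun _ => minFacSum_lt_card_primeFactors_of_dvd hsq (hfactors ▸ Finset.card_le_three)) hS hmax
  rw [hfactors, Finset.sum_insert (by simp [hpq, hpr]), Finset.sum_pair hqr, ← add_assoc] at hST
  have hzero {ℓ m : ℕ} (f : ZMod p × ZMod q × ZMod r →+ ZMod m) (h : ℓ.Coprime m) (x)
      (hx : x ∈ T ℓ) : f x = 0 := map_eq_zero_of_coprime_nsmul_eq_zero f h ((hT ℓ).2 x hx)
  let π₁ : ZMod p × ZMod q × ZMod r →+ ZMod p := .fst _ _
  let π₂ : ZMod p × ZMod q × ZMod r →+ ZMod q := (AddMonoidHom.fst _ _).comp (.snd _ _)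
  let π₃ : ZMod p × ZMod q × ZMod r →+ ZMod r := (AddMonoidHom.snd _ _).comp (.snd _ _)
  exact ⟨T p, T q, T r, hST, fun x hx => Prod.ext (hzero π₂ hpq' x hx) (hzero π₃ hpr' x hx),
    fun x hx => ⟨hzero π₁ hpq'.symm x hx, hzero π₃ hqr' x hx⟩,
    fun x hx => ⟨hzero π₁ hpr'.symm x hx, hzero π₂ hqr'.symm x hx⟩, (hT p).1, (hT q).1, (hT r).1⟩
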